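/- Let d be a positive integer, let x_1, …, x_m ∈ [−1,1]^d be design points (with coordinates x_{ij}, j = 1,…,d), let n_1, …, n_m be positive integers with n = n_1 + ⋯ + n_m, let F_ξ = (1/n) Σ_{i=1}^m n_i δ_{x_i}, and let F_asin be the probability measure on [−1,1]^d with density ∏_{j=1}^d 1/(π√(1−t_j²)) with respect to Lebesgue measure on (−1,1)^d. Then ∫∫ K_d(x,t) d(F_asin−F_ξ)(x) d(F_asin−F_ξ)(t) = (1 + 2/π − 4/π²)^d − (2/n) Σ_{i=1}^m n_i ∏_{j=1}^d (1 + 1/π + |x_{ij}|/2 − (1/π)(x_{ij}·arcsin(x_{ij}) + √(1−x_{ij}²))) + (1/n²) Σ_{i=1}^m Σ_{k=1}^m n_i n_k ∏_{j=1}^d (1 + (|x_{ij}| + |x_{kj}| − |x_{ij} − x_{kj}|)/2), where K_d(x,t) = ∏_{j=1}^d (1 + (|x_j| + |t_j| − |x_j − t_j|)/2). -/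

import Mathlib

open MeasureTheory Real
open scoped ENNReal

/-- The density of the arcsine law on `(-1, 1)`, extended by zero. -/
noncomputable def arcsineDensity (t : ℝ) : ℝ :=
  (Set.Ioo (-1 : ℝ) 1).indicator (fun t => 1 / (π * √(1 - t ^ 2))) t

/-- The product of arcsine laws on `(-1, 1)^d`. -/
noncomputable def arcsineMeasure (d : ℕ) : Measure (Fin d → ℝ) :=
  (volume.restrict (Set.univ.pi fun _ : Fin d => Set.Ioo (-1 : ℝ) 1)).withDensity
    fun t => ENNReal.ofReal (∏ j, 1 / (π * √(1 - t j ^ 2)))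

lemma sin_image_Ioo : Real.sin '' Set.Ioo (-(π / 2)) (π / 2) = Set.Ioo (-1) 1 := by
  ext y
  constructor
  · rintro ⟨θ, hθ, rfl⟩
    have hc := Real.cos_pos_of_mem_Ioo hθ
    constructor <;> nlinarith [Real.sin_sq_add_cos_sq θ]
  · rintro hy
    exact ⟨Real.arcsin y, ⟨Real.neg_pi_div_two_lt_arcsin.2 hy.1, Real.arcsin_lt_pi_div_two.2 hy.2⟩,
      Real.sin_arcsin hy.1.le hy.2.le⟩

lemma abs_cos_smul_arcsine_sin (f : ℝ → ℝ) {θ : ℝ} (hθ : θ ∈ Set.Ioo (-(π / 2)) (π / 2)) :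
    |Real.cos θ| • (1 / (π * √(1 - Real.sin θ ^ 2)) * f (Real.sin θ))
      = 1 / π * f (Real.sin θ) := by
  have hc := Real.cos_pos_of_mem_Ioo hθ
  rw [← Real.abs_cos_eq_sqrt_one_sub_sin_sq, abs_of_pos hc, smul_eq_mul]
  field_simp

lemma arcsineDensity_mul (f : ℝ → ℝ) :
    (fun t => arcsineDensity t * f t)
      = (Set.Ioo (-1 : ℝ) 1).indicator fun t => 1 / (π * √(1 - t ^ 2)) * f t := by
  ext t
  by_cases ht : t ∈ Set.Ioo (-1 : ℝ) 1 <;> simp [arcsineDensity, ht]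

lemma injOn_sin_Ioo : Set.InjOn Real.sin (Set.Ioo (-(π / 2)) (π / 2)) :=
  Real.injOn_sin.mono Set.Ioo_subset_Icc_self

lemma integral_arcsineDensity_mul (f : ℝ → ℝ) :
    ∫ t, arcsineDensity t * f t = 1 / π * ∫ θ in (-(π / 2))..(π / 2), f (Real.sin θ) := by
  rw [arcsineDensity_mul, integral_indicator measurableSet_Ioo, ← sin_image_Ioo,
    integral_image_eq_integral_abs_deriv_smul measurableSet_Ioo
      (fun θ _ => (Real.hasDerivAt_sin θ).hasDerivWithinAt) injOn_sin_Ioo,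
    setIntegral_congr_fun measurableSet_Ioo fun θ hθ => abs_cos_smul_arcsine_sin f hθ,
    integral_const_mul, intervalIntegral.integral_of_le (by linarith [Real.pi_pos]),
    integral_Ioc_eq_integral_Ioo]

lemma integrable_arcsineDensity_mul {f : ℝ → ℝ} (hf : Continuous f) :
    Integrable fun t => arcsineDensity t * f t := by
  rw [arcsineDensity_mul, integrable_indicator_iff measurableSet_Ioo, ← sin_image_Ioo,
    integrableOn_image_iff_integrableOn_abs_deriv_smul measurableSet_Ioo
      (fun θ _ => (Real.hasDerivAt_sin θ).hasDerivWithinAt) injOn_sin_Ioo,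
    integrableOn_congr_fun (fun θ hθ => abs_cos_smul_arcsine_sin f hθ) measurableSet_Ioo]
  exact (Continuous.integrableOn_Icc (by fun_prop)).mono_set Set.Ioo_subset_Icc_self

lemma measurable_arcsine_prod {d : ℕ} :
    Measurable fun t : Fin d → ℝ => ENNReal.ofReal (∏ j, 1 / (π * √(1 - t j ^ 2))) := by
  fun_prop

lemma indicator_toReal_smul_prod {d : ℕ} (f : Fin d → ℝ → ℝ) :
    (Set.univ.pi fun _ : Fin d => Set.Ioo (-1 : ℝ) 1).indicator
        (fun t => (ENNReal.ofReal (∏ j, 1 / (π * √(1 - t j ^ 2)))).toReal • ∏ j, f j (t j))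
      = fun t => ∏ j, (arcsineDensity (t j) * f j (t j)) := by
  ext t
  by_cases ht : t ∈ Set.univ.pi fun _ : Fin d => Set.Ioo (-1 : ℝ) 1
  · rw [Set.indicator_of_mem ht, ENNReal.toReal_ofReal
      (Finset.prod_nonneg fun j _ => by positivity), smul_eq_mul, ← Finset.prod_mul_distrib]
    refine Finset.prod_congr rfl fun j _ => ?_
    rw [arcsineDensity, Set.indicator_of_mem (ht j trivial)]
  · rw [Set.indicator_of_notMem ht]
    obtain ⟨j, hj⟩ : ∃ j, t j ∉ Set.Ioo (-1 : ℝ) 1 := by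
      simpa only [Set.mem_univ_pi, not_forall] using ht
    refine (Finset.prod_eq_zero (Finset.mem_univ j) ?_).symm
    rw [arcsineDensity, Set.indicator_of_notMem hj, zero_mul]

lemma integral_arcsineMeasure_prod {d : ℕ} (f : Fin d → ℝ → ℝ) :
    ∫ t, ∏ j, f j (t j) ∂arcsineMeasure d
      = ∏ j, (1 / π * ∫ θ in (-(π / 2))..(π / 2), f j (Real.sin θ)) := by
  rw [arcsineMeasure, integral_withDensity_eq_integral_toReal_smul measurable_arcsine_prod
      (ae_of_all _ fun _ => ENNReal.ofReal_lt_top),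
    ← integral_indicator (MeasurableSet.univ_pi fun _ => measurableSet_Ioo),
    indicator_toReal_smul_prod,
    integral_fintype_prod_volume_eq_prod (fun j t => arcsineDensity t * f j t)]
  simp only [integral_arcsineDensity_mul]

lemma integrable_arcsineMeasure_prod {d : ℕ} {f : Fin d → ℝ → ℝ} (hf : ∀ j, Continuous (f j)) :
    Integrable (fun t => ∏ j, f j (t j)) (arcsineMeasure d) := by
  rw [arcsineMeasure, integrable_withDensity_iff_integrable_smul' measurable_arcsine_prod
      (ae_of_all _ fun _ => ENNReal.ofReal_lt_top), ← IntegrableOn,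
    ← integrable_indicator_iff (MeasurableSet.univ_pi fun _ => measurableSet_Ioo),
    indicator_toReal_smul_prod]
  exact Integrable.fintype_prod fun j => integrable_arcsineDensity_mul (hf j)

lemma integral_abs_sub_sin {x : ℝ} (hx : x ∈ Set.Icc (-1 : ℝ) 1) :
    ∫ θ in (-(π / 2))..(π / 2), |x - Real.sin θ|
      = 2 * (x * Real.arcsin x + √(1 - x ^ 2)) := by
  have hi : ∀ a b : ℝ, IntervalIntegrable (fun θ => |x - Real.sin θ|) volume a b :=
    fun a b => Continuous.intervalIntegrable (by fun_prop) a b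
  have hl : ∫ θ in (-(π / 2))..(Real.arcsin x), |x - Real.sin θ|
      = ∫ θ in (-(π / 2))..(Real.arcsin x), (x - Real.sin θ) := by
    refine intervalIntegral.integral_congr fun θ hθ => ?_
    rw [Set.uIcc_of_le (Real.neg_pi_div_two_le_arcsin x)] at hθ
    refine abs_of_nonneg (sub_nonneg.2 ?_)
    rw [← Real.sin_arcsin hx.1 hx.2]
    exact Real.sin_le_sin_of_le_of_le_pi_div_two hθ.1 (Real.arcsin_le_pi_div_two x) hθ.2
  have hr : ∫ θ in (Real.arcsin x)..(π / 2), |x - Real.sin θ|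
      = ∫ θ in (Real.arcsin x)..(π / 2), (Real.sin θ - x) := by
    refine intervalIntegral.integral_congr fun θ hθ => ?_
    rw [Set.uIcc_of_le (Real.arcsin_le_pi_div_two x)] at hθ
    refine (abs_of_nonpos (sub_nonpos.2 ?_)).trans (neg_sub _ _)
    rw [← Real.sin_arcsin hx.1 hx.2]
    exact Real.sin_le_sin_of_le_of_le_pi_div_two (Real.neg_pi_div_two_le_arcsin x) hθ.2 hθ.1
  rw [← intervalIntegral.integral_add_adjacent_intervals (hi _ (Real.arcsin x)) (hi _ _), hl, hr,
    intervalIntegral.integral_sub (by simp) (Continuous.intervalIntegrable (by fun_prop) _ _),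
    intervalIntegral.integral_sub (Continuous.intervalIntegrable (by fun_prop) _ _) (by simp)]
  simp only [intervalIntegral.integral_const, integral_sin, Real.cos_arcsin, Real.cos_neg,
    Real.cos_pi_div_two, smul_eq_mul]
  ring

lemma arcsine_mean_kernel {x : ℝ} (hx : x ∈ Set.Icc (-1 : ℝ) 1) :
    1 / π * ∫ θ in (-(π / 2))..(π / 2), (1 + (|x| + |Real.sin θ| - |x - Real.sin θ|) / 2)
      = 1 + 1 / π + |x| / 2 - (1 / π) * (x * Real.arcsin x + √(1 - x ^ 2)) := by
  have h0 := integral_abs_sub_sin (x := 0) (by simp)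
  simp only [zero_sub, abs_neg] at h0
  have hc : ∀ f : ℝ → ℝ, Continuous f → IntervalIntegrable f volume (-(π / 2)) (π / 2) :=
    fun f hf => hf.intervalIntegrable _ _
  rw [intervalIntegral.integral_add (hc _ (by fun_prop)) (hc _ (by fun_prop)),
    intervalIntegral.integral_div,
    intervalIntegral.integral_sub (hc _ (by fun_prop)) (hc _ (by fun_prop)),
    intervalIntegral.integral_add (hc _ (by fun_prop)) (hc _ (by fun_prop)),
    h0, integral_abs_sub_sin hx]
  simp
  field_simp
  ring

lemma integral_id_mul_sin :
    ∫ θ in (-(π / 2))..(π / 2), θ * Real.sin θ = 2 := by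
  have h : ∀ θ : ℝ, HasDerivAt (fun θ => Real.sin θ - θ * Real.cos θ) (θ * Real.sin θ) θ := by
    intro θ
    refine ((Real.hasDerivAt_sin θ).sub
      ((hasDerivAt_id θ).mul (Real.hasDerivAt_cos θ))).congr_deriv ?_
    simp
  rw [intervalIntegral.integral_eq_sub_of_hasDerivAt (fun θ _ => h θ)
    (Continuous.intervalIntegrable (by fun_prop) _ _)]
  simp
  norm_num

lemma arcsine_mean_mean_kernel :
    1 / π * ∫ φ in (-(π / 2))..(π / 2), (1 / π * ∫ θ in (-(π / 2))..(π / 2),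
        (1 + (|Real.sin φ| + |Real.sin θ| - |Real.sin φ - Real.sin θ|) / 2))
      = 1 + 2 / π - 4 / π ^ 2 := by
  have hle : -(π / 2) ≤ π / 2 := by linarith [Real.pi_pos]
  have h0 := integral_abs_sub_sin (x := 0) (by simp)
  simp only [zero_sub, abs_neg] at h0
  have hcongr : ∀ φ ∈ Set.uIcc (-(π / 2)) (π / 2),
      (1 / π * ∫ θ in (-(π / 2))..(π / 2),
        (1 + (|Real.sin φ| + |Real.sin θ| - |Real.sin φ - Real.sin θ|) / 2))
      = (1 + 1 / π) + (1 / 2) * |Real.sin φ| - (1 / π) * (φ * Real.sin φ)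
        - (1 / π) * Real.cos φ := by
    intro φ hφ
    rw [Set.uIcc_of_le hle] at hφ
    rw [arcsine_mean_kernel (Real.sin_mem_Icc φ), Real.arcsin_sin hφ.1 hφ.2,
      ← Real.abs_cos_eq_sqrt_one_sub_sin_sq, abs_of_nonneg (Real.cos_nonneg_of_mem_Icc hφ)]
    ring
  have hc : ∀ f : ℝ → ℝ, Continuous f → IntervalIntegrable f volume (-(π / 2)) (π / 2) :=
    fun f hf => hf.intervalIntegrable _ _
  rw [intervalIntegral.integral_congr hcongr,
    intervalIntegral.integral_sub (hc _ (by fun_prop)) (hc _ (by fun_prop)),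
    intervalIntegral.integral_sub (hc _ (by fun_prop)) (hc _ (by fun_prop)),
    intervalIntegral.integral_add (hc _ (by fun_prop)) (hc _ (by fun_prop))]
  simp only [intervalIntegral.integral_const_mul, h0, integral_id_mul_sin, integral_cos]
  simp
  field_simp
  ring

lemma integral_empirical {E : Type*} [MeasurableSpace E] [MeasurableSingletonClass E]
    {m : ℕ} (x : Fin m → E) (nn : Fin m → ℕ) (n : ℕ) (f : E → ℝ) :
    ∫ t, f t ∂(((n : ℝ≥0∞))⁻¹ • ∑ i, (nn i : ℝ≥0∞) • Measure.dirac (x i))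
      = (n : ℝ)⁻¹ * ∑ i, (nn i : ℝ) * f (x i) := by
  rw [integral_smul_measure, integral_finsetSum_measure fun i _ =>
    (integrable_dirac (by simp)).smul_measure (by simp)]
  simp [integral_smul_measure]

/-- closed form for the squared arcsine discrepancy
`D²(ξ; F_asin)` on `[-1,1]^d` under the kernel
`K_d(x,t) = ∏_j (1 + (|x_j|+|t_j|-|x_j-t_j|)/2)`, where the squared discrepancy
`∫∫ K_d d(F_asin − F_ξ) d(F_asin − F_ξ)` is written out bilinearly. -/
theorem arcsine_discrepancy_sq_closed_form
    (d : ℕ) (hd : 0 < d)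
    (m : ℕ) (x : Fin m → Fin d → ℝ)
    (hx : ∀ i, x i ∈ Set.univ.pi fun _ : Fin d => Set.Icc (-1 : ℝ) 1)
    (nn : Fin m → ℕ) (hnn : ∀ i, 0 < nn i)
    (n : ℕ) (hn : n = ∑ i, nn i)
    (K : (Fin d → ℝ) → (Fin d → ℝ) → ℝ)
    (hK : K = fun a t => ∏ j, (1 + (|a j| + |t j| - |a j - t j|) / 2))
    (μ ν : Measure (Fin d → ℝ))
    (hμ : μ = (volume.restrict (Set.univ.pi fun _ : Fin d => Set.Ioo (-1 : ℝ) 1)).withDensity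
      fun t => ENNReal.ofReal (∏ j, 1 / (π * Real.sqrt (1 - t j ^ 2))))
    (hν : ν = ((n : ℝ≥0∞))⁻¹ • ∑ i, (nn i : ℝ≥0∞) • Measure.dirac (x i)) :
    (∫ a, ∫ t, K a t ∂μ ∂μ) - (∫ a, ∫ t, K a t ∂ν ∂μ) - (∫ a, ∫ t, K a t ∂μ ∂ν)
        + (∫ a, ∫ t, K a t ∂ν ∂ν)
      = (1 + 2 / π - 4 / π ^ 2) ^ d
        - (2 / n) * ∑ i, (nn i : ℝ) *
            ∏ j, (1 + 1 / π + |x i j| / 2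
              - (1 / π) * (x i j * Real.arcsin (x i j) + Real.sqrt (1 - x i j ^ 2)))
        + (1 / (n : ℝ) ^ 2) *
            ∑ i, ∑ k, (nn i : ℝ) * (nn k : ℝ) *
              ∏ j, (1 + (|x i j| + |x k j| - |x i j - x k j|) / 2) := by
  have hμ' : μ = arcsineMeasure d := hμ
  subst hμ' hν hK
  have hmean : ∀ a : Fin d → ℝ,
      ∫ t, ∏ j, (1 + (|a j| + |t j| - |a j - t j|) / 2) ∂arcsineMeasure d
        = ∏ j, (1 / π * ∫ θ in (-(π / 2))..(π / 2),
            (1 + (|a j| + |Real.sin θ| - |a j - Real.sin θ|) / 2)) := fun a =>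
    integral_arcsineMeasure_prod fun j t => 1 + (|a j| + |t| - |a j - t|) / 2
  have hpoint : ∀ i, ∫ t, ∏ j, (1 + (|x i j| + |t j| - |x i j - t j|) / 2) ∂arcsineMeasure d
      = ∏ j, (1 + 1 / π + |x i j| / 2
              - (1 / π) * (x i j * Real.arcsin (x i j) + Real.sqrt (1 - x i j ^ 2))) := fun i =>
    (hmean (x i)).trans (Finset.prod_congr rfl fun j _ => arcsine_mean_kernel (hx i j trivial))
  have hself : ∫ a, ∫ t, ∏ j, (1 + (|a j| + |t j| - |a j - t j|) / 2)
      ∂arcsineMeasure d ∂arcsineMeasure d = (1 + 2 / π - 4 / π ^ 2) ^ d := by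
    simp only [hmean]
    rw [integral_arcsineMeasure_prod fun _ s => 1 / π * ∫ θ in (-(π / 2))..(π / 2),
      (1 + (|s| + |Real.sin θ| - |s - Real.sin θ|) / 2)]
    simp only [arcsine_mean_mean_kernel, Finset.prod_const, Finset.card_univ, Fintype.card_fin]
  have hsymm : ∀ (a : Fin d → ℝ) i, ∏ j, (1 + (|a j| + |x i j| - |a j - x i j|) / 2)
      = ∏ j, (1 + (|x i j| + |a j| - |x i j - a j|) / 2) := fun a i =>
    Finset.prod_congr rfl fun j _ => by rw [abs_sub_comm, add_comm |a j|]
  have hcross : ∫ a, (n : ℝ)⁻¹ * ∑ i, (nn i : ℝ) *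
        ∏ j, (1 + (|a j| + |x i j| - |a j - x i j|) / 2) ∂arcsineMeasure d
      = (n : ℝ)⁻¹ * ∑ i, (nn i : ℝ) * ∏ j, (1 + 1 / π + |x i j| / 2
              - (1 / π) * (x i j * Real.arcsin (x i j) + Real.sqrt (1 - x i j ^ 2))) := by
    simp only [hsymm]
    rw [integral_const_mul, integral_finsetSum _ fun i _ =>
      (integrable_arcsineMeasure_prod (f := fun j t => 1 + (|x i j| + |t| - |x i j - t|) / 2)
        fun j => by fun_prop).const_mul _]
    simp only [integral_const_mul, hpoint]
  simp only [integral_empirical, hself, hpoint, hcross]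
  have hdouble : ∀ A : Fin m → Fin m → ℝ,
      (n : ℝ)⁻¹ * ∑ i, (nn i : ℝ) * ((n : ℝ)⁻¹ * ∑ k, (nn k : ℝ) * A i k)
        = 1 / (n : ℝ) ^ 2 * ∑ i, ∑ k, (nn i : ℝ) * nn k * A i k := by
    intro A
    simp only [Finset.mul_sum]
    refine Finset.sum_congr rfl fun i _ => Finset.sum_congr rfl fun k _ => ?_
    ring
  rw [hdouble]
  ring
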